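/- For every choice of constants 0 < α ≤ β, T > 0 and C₁ > 0 there exists a constant C > 0 with the following property. For every abstract FEM setting (H, V, ‖·‖_h, a_h) with constants α, β, every h > 0, every linear map E : V → H with ‖E v‖ ≤ C₁ h² ‖v‖_h for all v ∈ V, every N ∈ ℕ with N ≥ 2 and time step k := T/N, every continuously differentiable g : [0,T] → H, every σ¹, …, σ^{N−1} ∈ H, and every ζ⁰, …, ζᴺ ∈ V satisfying ((ζ^{n+1} − 2ζⁿ + ζ^{n−1})/k², v) + a_h((ζ^{n+1} + 2ζⁿ + ζ^{n−1})/4, v) = ((g((n+1)k) + 2g(nk) + g((n−1)k))/4, E v) + (σⁿ, v) for all v ∈ V and n = 1, …, N−1, one has for every 1 ≤ m ≤ N−1: ‖(ζ^{m+1} − ζ^m)/k‖² + ‖(ζ^{m+1} + ζ^m)/2‖_h² ≤ C ( ‖(ζ¹ − ζ⁰)/k‖² + ‖(ζ¹ + ζ⁰)/2‖_h² + h⁴ ( sup_{s ∈ [0,T]} ‖g(s)‖² + ∫₀ᵀ ‖g'(s)‖² ds ) + k Σ_{n=1}^{N−1} ‖σⁿ‖² ). No CFL condition or inverse inequality is assumed.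 -/

import Mathlib

open scoped RealInnerProductSpace

/-!
Testing the scheme with the central difference `(ζ (n + 1) - ζ (n - 1)) / (2 * k)`, which is both
the mean of two consecutive difference quotients and the difference quotient of the means, makes
the left-hand side the exact increment of the discrete energy `Φ`. The load acts on increments of
`E` applied to the means; summation by parts moves the difference onto the load, where it is
controlled by the total variation of `g`, hence by `∫ ‖g'‖`. If `X²` is the maximum of `Φ`, this
yields `X² ≤ Φ 0 + X * D` with `D` depending on the data only, so `X² ≤ 2 * Φ 0 + D²` by Young's
inequality: no discrete Grönwall argument, and hence no restriction on `k`, is needed.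
-/

section TimeSequences

variable {X : Type*} [AddCommGroup X] [Module ℝ X]

/-- The forward difference quotient `(xₙ₊₁ - xₙ) / k` of a sequence of time samples with step `k`.
Iterating it gives the second difference of the scheme, centred at index `n + 1`. -/
noncomputable def diffQuot (k : ℝ) (x : ℕ → X) (n : ℕ) : X := k⁻¹ • (x (n + 1) - x n)

/-- The mean `(xₙ₊₁ + xₙ) / 2` of consecutive terms. Iterating it gives the weights
`1/4, 1/2, 1/4` of the scheme, centred at index `n + 1`. -/
noncomputable def consecutiveMean (x : ℕ → X) (n : ℕ) : X := (1 / 2 : ℝ) • (x (n + 1) + x n)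

lemma consecutiveMean_diffQuot (k : ℝ) (x : ℕ → X) :
    consecutiveMean (diffQuot k x) = diffQuot k (consecutiveMean x) := by
  ext n
  simp only [consecutiveMean, diffQuot]
  module

lemma diffQuot_diffQuot (k : ℝ) (x : ℕ → X) (n : ℕ) :
    diffQuot k (diffQuot k x) n = (k ^ 2)⁻¹ • (x (n + 2) - (2 : ℝ) • x (n + 1) + x n) := by
  simp only [diffQuot, pow_two, mul_inv]
  module

lemma consecutiveMean_consecutiveMean (x : ℕ → X) (n : ℕ) :
    consecutiveMean (consecutiveMean x) n =
      (1 / 4 : ℝ) • (x (n + 2) + (2 : ℝ) • x (n + 1) + x n) := by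
  simp only [consecutiveMean]
  module

lemma apply_consecutiveMean_diffQuot {b : X →ₗ[ℝ] X →ₗ[ℝ] ℝ} (hb : ∀ x y, b x y = b y x)
    {k : ℝ} (hk : k ≠ 0) (x : ℕ → X) (n : ℕ) :
    2 * k * b (consecutiveMean x n) (diffQuot k x n) =
      b (x (n + 1)) (x (n + 1)) - b (x n) (x n) := by
  simp only [consecutiveMean, diffQuot, map_smul, map_add, map_sub, LinearMap.smul_apply,
    LinearMap.add_apply, smul_eq_mul, hb (x n) (x (n + 1))]
  field_simp
  ring

end TimeSequences

section NormedSequences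

variable {X : Type*} [NormedAddCommGroup X] [NormedSpace ℝ X] {x : ℕ → X}

lemma norm_consecutiveMean_le {S : ℝ} {n : ℕ} (hn : ‖x n‖ ≤ S) (hn_succ : ‖x (n + 1)‖ ≤ S) :
    ‖consecutiveMean x n‖ ≤ S := by
  rw [consecutiveMean, norm_smul, Real.norm_of_nonneg (by norm_num)]
  linarith [norm_add_le (x (n + 1)) (x n)]

lemma sum_norm_consecutiveMean_sub_le (x : ℕ → X) (p : ℕ) :
    ∑ n ∈ Finset.range p, ‖consecutiveMean x (n + 1) - consecutiveMean x n‖ ≤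
      ∑ n ∈ Finset.range (p + 1), ‖x (n + 1) - x n‖ := by
  have increment_le (n : ℕ) : ‖consecutiveMean x (n + 1) - consecutiveMean x n‖ ≤
      1 / 2 * ‖x (n + 2) - x (n + 1)‖ + 1 / 2 * ‖x (n + 1) - x n‖ := by
    have increment_eq : consecutiveMean x (n + 1) - consecutiveMean x n =
        (1 / 2 : ℝ) • (x (n + 2) - x (n + 1)) + (1 / 2 : ℝ) • (x (n + 1) - x n) := by
      simp only [consecutiveMean]
      module
    rw [increment_eq]
    refine (norm_add_le _ _).trans_eq ?_
    rw [norm_smul, norm_smul, Real.norm_of_nonneg (by norm_num)]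
  have sum_le := Finset.sum_le_sum fun n (_ : n ∈ Finset.range p) ↦ increment_le n
  rw [Finset.sum_add_distrib, ← Finset.mul_sum, ← Finset.mul_sum] at sum_le
  have drop_first := Finset.sum_range_succ' (fun n ↦ ‖x (n + 1) - x n‖) p
  have drop_last := Finset.sum_range_succ (fun n ↦ ‖x (n + 1) - x n‖) p
  linarith [norm_nonneg (x (0 + 1) - x 0), norm_nonneg (x (p + 1) - x p)]

end NormedSequences

section SummationByParts

variable {H : Type*} [NormedAddCommGroup H] [InnerProductSpace ℝ H]

lemma sum_inner_sub_by_parts (F e : ℕ → H) (p : ℕ) :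
    ∑ n ∈ Finset.range (p + 1), ⟪F n, e (n + 1) - e n⟫ =
      ⟪F p, e (p + 1)⟫ - ⟪F 0, e 0⟫ -
        ∑ n ∈ Finset.range p, ⟪F (n + 1) - F n, e (n + 1)⟫ := by
  induction p with
  | zero => simp [inner_sub_right]
  | succ p ih =>
    rw [Finset.sum_range_succ, ih, Finset.sum_range_succ _ p]
    simp only [inner_sub_left, inner_sub_right]
    ring

lemma sum_inner_sub_le {F e : ℕ → H} {S L R : ℝ} {p : ℕ} (hF : ∀ n ≤ p, ‖F n‖ ≤ S)
    (hL : ∑ n ∈ Finset.range p, ‖F (n + 1) - F n‖ ≤ L) (he : ∀ n ≤ p + 1, ‖e n‖ ≤ R) :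
    ∑ n ∈ Finset.range (p + 1), ⟪F n, e (n + 1) - e n⟫ ≤ (2 * S + L) * R := by
  have hS : 0 ≤ S := (norm_nonneg _).trans (hF 0 zero_le)
  have hR : 0 ≤ R := (norm_nonneg _).trans (he 0 zero_le)
  have last_le : ⟪F p, e (p + 1)⟫ ≤ S * R :=
    (real_inner_le_norm _ _).trans (mul_le_mul (hF p le_rfl) (he _ le_rfl) (norm_nonneg _) hS)
  have neg_first_le : -⟪F 0, e 0⟫ ≤ S * R :=
    (neg_le_abs _).trans <| (abs_real_inner_le_norm _ _).trans <|
      mul_le_mul (hF 0 zero_le) (he 0 zero_le) (norm_nonneg _) hS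
  have neg_sum_le : -∑ n ∈ Finset.range p, ⟪F (n + 1) - F n, e (n + 1)⟫ ≤ L * R := calc
    _ = ∑ n ∈ Finset.range p, -⟪F (n + 1) - F n, e (n + 1)⟫ := by rw [Finset.sum_neg_distrib]
    _ ≤ ∑ n ∈ Finset.range p, ‖F (n + 1) - F n‖ * R := by
      refine Finset.sum_le_sum fun n hn ↦ ?_
      have := Finset.mem_range.1 hn
      refine (neg_le_abs _).trans ((abs_real_inner_le_norm _ _).trans ?_)
      gcongr
      exact he _ (by omega)
    _ ≤ L * R := by
      rw [← Finset.sum_mul]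
      gcongr
  rw [sum_inner_sub_by_parts]
  linarith

end SummationByParts

lemma le_two_mul_add_sq_of_forall_le_add_mul {Φ : ℕ → ℝ} {D : ℝ} {M : ℕ}
    (hΦ : ∀ n ≤ M, 0 ≤ Φ n)
    (step : ∀ X, 0 ≤ X → (∀ n ≤ M, Φ n ≤ X ^ 2) → ∀ n < M, Φ (n + 1) ≤ Φ 0 + X * D)
    {m : ℕ} (hm : m ≤ M) : Φ m ≤ 2 * Φ 0 + D ^ 2 := by
  obtain ⟨q, hq, q_max⟩ := Finset.exists_max_image (Finset.range (M + 1)) Φ ⟨0, by simp⟩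
  have hqM : q ≤ M := Finset.mem_range_succ_iff.1 hq
  have le_max : ∀ n ≤ M, Φ n ≤ Φ q := fun n hn ↦ q_max n (Finset.mem_range_succ_iff.2 hn)
  suffices Φ q ≤ 2 * Φ 0 + D ^ 2 from (le_max m hm).trans this
  have sq_sqrt_max : √(Φ q) ^ 2 = Φ q := Real.sq_sqrt (hΦ q hqM)
  rcases q with _ | p
  · linarith [hΦ 0 zero_le, sq_nonneg D]
  · have max_le := step √(Φ (p + 1)) (Real.sqrt_nonneg _) (by rwa [sq_sqrt_max]) p hqM
    linarith [two_mul_le_add_sq √(Φ (p + 1)) D]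

section EnergyEstimate

variable {H V : Type*} [NormedAddCommGroup H] [InnerProductSpace ℝ H] [AddCommGroup V]
  [Module ℝ V] {ι E : V →ₗ[ℝ] H} {a : V →ₗ[ℝ] V →ₗ[ℝ] ℝ} {k : ℝ} {M : ℕ} {F s : ℕ → H}
  {ζ : ℕ → V}

/-- The implicit (Newmark type) scheme for an abstract wave equation, with load `F` acting through
`E` and source `s` acting through `ι`. The discrete space `V` is mapped into `H` by `ι`, and the
equation centred at time level `n + 1` has index `n`, so there are `M` equations for
`ζ 0, …, ζ (M + 1)`. -/
def IsImplicitScheme (ι E : V →ₗ[ℝ] H) (a : V →ₗ[ℝ] V →ₗ[ℝ] ℝ) (k : ℝ) (M : ℕ) (F s : ℕ → H)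
    (ζ : ℕ → V) : Prop :=
  ∀ n < M, ∀ v : V,
    ⟪ι (diffQuot k (diffQuot k ζ) n), ι v⟫ + a (consecutiveMean (consecutiveMean ζ) n) v =
      ⟪F n, E v⟫ + ⟪s n, ι v⟫

/-- Twice the sum of the kinetic and potential energies of `ζ` on the time interval between levels
`n` and `n + 1`. -/
noncomputable def discreteEnergy (ι : V →ₗ[ℝ] H) (a : V →ₗ[ℝ] V →ₗ[ℝ] ℝ) (k : ℝ)
    (ζ : ℕ → V) (n : ℕ) : ℝ :=
  ‖ι (diffQuot k ζ n)‖ ^ 2 + a (consecutiveMean ζ n) (consecutiveMean ζ n)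

lemma discreteEnergy_nonneg (ha : ∀ w, 0 ≤ a w w) (n : ℕ) : 0 ≤ discreteEnergy ι a k ζ n :=
  add_nonneg (sq_nonneg _) (ha _)

lemma IsImplicitScheme.discreteEnergy_succ_sub (hζ : IsImplicitScheme ι E a k M F s ζ)
    (a_symm : ∀ w v, a w v = a v w) (hk : k ≠ 0) {n : ℕ} (hn : n < M) :
    discreteEnergy ι a k ζ (n + 1) - discreteEnergy ι a k ζ n =
      2 * ⟪F n, E (consecutiveMean ζ (n + 1)) - E (consecutiveMean ζ n)⟫ +
        2 * k * ⟪s n, ι (consecutiveMean (diffQuot k ζ) n)⟫ := by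
  have kinetic := apply_consecutiveMean_diffQuot (b := (innerₗ H).compl₁₂ ι ι)
    (fun w v ↦ real_inner_comm _ _) hk (diffQuot k ζ) n
  have potential := apply_consecutiveMean_diffQuot a_symm hk (consecutiveMean ζ) n
  have load : k * ⟪F n, E (diffQuot k (consecutiveMean ζ) n)⟫ =
      ⟪F n, E (consecutiveMean ζ (n + 1)) - E (consecutiveMean ζ n)⟫ := by
    rw [diffQuot, map_smul, map_sub, inner_smul_right, mul_inv_cancel_left₀ hk]
  have tested := hζ n hn (consecutiveMean (diffQuot k ζ) n)
  simp only [LinearMap.compl₁₂_apply, innerₗ_apply_apply, real_inner_self_eq_norm_sq] at kinetic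
  rw [real_inner_comm] at kinetic
  rw [← consecutiveMean_diffQuot] at potential load
  simp only [discreteEnergy]
  linear_combination 2 * k * tested - kinetic - potential + 2 * load

lemma IsImplicitScheme.discreteEnergy_eq_add_sum (hζ : IsImplicitScheme ι E a k M F s ζ)
    (a_symm : ∀ w v, a w v = a v w) (hk : k ≠ 0) {m : ℕ} (hm : m ≤ M) :
    discreteEnergy ι a k ζ m = discreteEnergy ι a k ζ 0 +
      2 * ∑ n ∈ Finset.range m,
        ⟪F n, E (consecutiveMean ζ (n + 1)) - E (consecutiveMean ζ n)⟫ +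
      2 * k * ∑ n ∈ Finset.range m, ⟪s n, ι (consecutiveMean (diffQuot k ζ) n)⟫ := by
  have telescope := Finset.sum_range_sub (discreteEnergy ι a k ζ) m
  rw [Finset.sum_congr rfl fun n hn ↦ hζ.discreteEnergy_succ_sub a_symm hk
    ((Finset.mem_range.1 hn).trans_le hm), Finset.sum_add_distrib, ← Finset.mul_sum,
    ← Finset.mul_sum] at telescope
  linear_combination -telescope

lemma norm_diffQuot_le_of_discreteEnergy_le_sq (ha : ∀ w, 0 ≤ a w w) {X : ℝ} (hX : 0 ≤ X) {n : ℕ}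
    (hn : discreteEnergy ι a k ζ n ≤ X ^ 2) : ‖ι (diffQuot k ζ n)‖ ≤ X :=
  le_of_sq_le_sq ((le_add_of_nonneg_right (ha _)).trans hn) hX

lemma sqrt_apply_consecutiveMean_le_of_discreteEnergy_le_sq {X : ℝ} (hX : 0 ≤ X) {n : ℕ}
    (hn : discreteEnergy ι a k ζ n ≤ X ^ 2) :
    √(a (consecutiveMean ζ n) (consecutiveMean ζ n)) ≤ X :=
  Real.sqrt_le_iff.2 ⟨hX, (le_add_of_nonneg_left (sq_nonneg _)).trans hn⟩

theorem IsImplicitScheme.discreteEnergy_le (hζ : IsImplicitScheme ι E a k M F s ζ)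
    (a_symm : ∀ w v, a w v = a v w) (ha : ∀ w, 0 ≤ a w w) {c : ℝ} (hc : 0 ≤ c)
    (hE : ∀ w, ‖E w‖ ≤ c * √(a w w)) (hk : 0 < k) {S L : ℝ} (hS : ∀ n < M, ‖F n‖ ≤ S)
    (hL : ∀ p < M, ∑ n ∈ Finset.range p, ‖F (n + 1) - F n‖ ≤ L) {m : ℕ} (hm : m ≤ M) :
    discreteEnergy ι a k ζ m ≤ 2 * discreteEnergy ι a k ζ 0 +
      (2 * c * (2 * S + L) + 2 * (k * ∑ n ∈ Finset.range M, ‖s n‖)) ^ 2 := by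
  refine le_two_mul_add_sq_of_forall_le_add_mul (fun n _ ↦ discreteEnergy_nonneg ha n) ?_ hm
  intro X hX energy_le p hp
  have load_le : ∑ n ∈ Finset.range (p + 1),
      ⟪F n, E (consecutiveMean ζ (n + 1)) - E (consecutiveMean ζ n)⟫ ≤ (2 * S + L) * (c * X) := by
    refine sum_inner_sub_le (e := fun n ↦ E (consecutiveMean ζ n))
      (fun n hn ↦ hS n (by omega)) (hL p hp) fun n hn ↦ (hE _).trans ?_
    gcongr
    exact sqrt_apply_consecutiveMean_le_of_discreteEnergy_le_sq hX (energy_le n (by omega))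
  have source_le : ∑ n ∈ Finset.range (p + 1), ⟪s n, ι (consecutiveMean (diffQuot k ζ) n)⟫ ≤
      (∑ n ∈ Finset.range M, ‖s n‖) * X := calc
    _ ≤ ∑ n ∈ Finset.range (p + 1), ‖s n‖ * X := by
      refine Finset.sum_le_sum fun n hn ↦ (real_inner_le_norm _ _).trans ?_
      have hn := Finset.mem_range.1 hn
      have velocity_le : ∀ j ≤ M, ‖ι (diffQuot k ζ j)‖ ≤ X := fun j hj ↦
        norm_diffQuot_le_of_discreteEnergy_le_sq ha hX (energy_le j hj)
      have map_mean : ι (consecutiveMean (diffQuot k ζ) n) =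
          consecutiveMean (fun j ↦ ι (diffQuot k ζ j)) n := by
        simp only [consecutiveMean, map_smul, map_add]
      rw [map_mean]
      gcongr
      exact norm_consecutiveMean_le (velocity_le n (by omega)) (velocity_le (n + 1) (by omega))
    _ ≤ (∑ n ∈ Finset.range M, ‖s n‖) * X := by
      rw [← Finset.sum_mul]
      gcongr
      omega
  have scaled_source_le := mul_le_mul_of_nonneg_left source_le (by positivity : 0 ≤ 2 * k)
  rw [hζ.discreteEnergy_eq_add_sum a_symm hk.ne' hp]
  linarith

end EnergyEstimate

lemma norm_le_sqrt_iSup_norm_sq {Y X : Type*} [TopologicalSpace Y] [SeminormedAddCommGroup X]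
    {K : Set Y} (hK : IsCompact K) {g : Y → X} (hg : ContinuousOn g K) {t : Y} (ht : t ∈ K) :
    ‖g t‖ ≤ √(⨆ s : K, ‖g s‖ ^ 2) := by
  have bddAbove : BddAbove (Set.range fun s : K ↦ ‖g s‖ ^ 2) := by
    rw [← Set.image_eq_range (fun s ↦ ‖g s‖ ^ 2)]
    exact hK.bddAbove_image (hg.norm.pow 2)
  exact Real.le_sqrt_of_sq_le (le_ciSup bddAbove ⟨t, ht⟩)

lemma sq_integral_le_mul_integral_sq {f : ℝ → ℝ} {a b : ℝ} (hab : a < b)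
    (hf : ContinuousOn f (Set.Icc a b)) :
    (∫ x in a..b, f x) ^ 2 ≤ (b - a) * ∫ x in a..b, f x ^ 2 := by
  have jensen := (even_two.convexOn_pow (𝕜 := ℝ)).map_set_average_le (f := f)
    (μ := MeasureTheory.volume) (t := Set.Ioc a b) (continuous_pow 2).continuousOn isClosed_univ
    (by simp [hab]) (by simp) (by simp) (hf.intervalIntegrable_of_Icc hab.le).1
    ((hf.pow 2).intervalIntegrable_of_Icc hab.le).1
  have hba : 0 < b - a := sub_pos.2 hab
  simp only [MeasureTheory.setAverage_eq, Real.volume_real_Ioc_of_le hab.le, smul_eq_mul,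
    ← intervalIntegral.integral_of_le hab.le] at jensen
  rw [mul_pow, inv_mul_eq_div, inv_pow, inv_mul_eq_div, div_le_div_iff₀ (by positivity) hba]
    at jensen
  nlinarith

section BoundedVariation

variable {X : Type*} [NormedAddCommGroup X] [NormedSpace ℝ X] {g g' : ℝ → X} {a b : ℝ}

lemma norm_sub_le_integral_norm_of_hasDerivWithinAt
    (hg : ∀ t ∈ Set.Icc a b, HasDerivWithinAt g (g' t) (Set.Icc a b) t)
    (hg' : ContinuousOn g' (Set.Icc a b)) {s t : ℝ} (hs : s ∈ Set.Icc a b)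
    (ht : t ∈ Set.Icc a b) (hst : s ≤ t) : ‖g t - g s‖ ≤ ∫ r in s..t, ‖g' r‖ := by
  have Icc_subset : Set.Icc s t ⊆ Set.Icc a b := Set.Icc_subset_Icc hs.1 ht.2
  have hasDerivAt : ∀ r ∈ Set.Ioo s t, HasDerivAt g (g' r) r := fun r hr ↦
    (hg r (Icc_subset (Set.Ioo_subset_Icc_self hr))).hasDerivAt
      (Icc_mem_nhds (hs.1.trans_lt hr.1) (hr.2.trans_le ht.2))
  refine norm_sub_le_integral_of_norm_deriv_le_of_le hst
    (fun r hr ↦ (hg r (Icc_subset hr)).continuousWithinAt.mono Icc_subset)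
    (fun r hr ↦ (hasDerivAt r hr).differentiableAt.differentiableWithinAt)
    (.of_forall fun r hr ↦ by rw [(hasDerivAt r hr).deriv])
    ((hg'.mono Icc_subset).norm.intervalIntegrable_of_Icc hst)

lemma sum_norm_sub_le_integral_norm_of_hasDerivWithinAt
    (hg : ∀ t ∈ Set.Icc a b, HasDerivWithinAt g (g' t) (Set.Icc a b) t)
    (hg' : ContinuousOn g' (Set.Icc a b)) {t : ℕ → ℝ} (ht : Monotone t) {p : ℕ}
    (htp : ∀ j ≤ p, t j ∈ Set.Icc a b) :
    ∑ j ∈ Finset.range p, ‖g (t (j + 1)) - g (t j)‖ ≤ ∫ r in a..b, ‖g' r‖ := calc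
  _ ≤ ∑ j ∈ Finset.range p, ∫ r in t j..t (j + 1), ‖g' r‖ :=
    Finset.sum_le_sum fun j hj ↦ norm_sub_le_integral_norm_of_hasDerivWithinAt hg hg'
      (htp j (Finset.mem_range.1 hj).le) (htp (j + 1) (Finset.mem_range.1 hj)) (ht j.le_succ)
  _ = ∫ r in t 0..t p, ‖g' r‖ :=
    intervalIntegral.sum_integral_adjacent_intervals fun j hj ↦
      (hg'.mono (Set.Icc_subset_Icc (htp j hj.le).1 (htp (j + 1) hj).2)).norm
        |>.intervalIntegrable_of_Icc (ht j.le_succ)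
  _ ≤ ∫ r in a..b, ‖g' r‖ :=
    have hab : a ≤ b := (htp 0 zero_le).1.trans (htp 0 zero_le).2
    intervalIntegral.integral_mono_interval (htp 0 zero_le).1 (ht zero_le) (htp p le_rfl).2
      (.of_forall fun _ ↦ norm_nonneg _) (hg'.norm.intervalIntegrable_of_Icc hab)

end BoundedVariation

lemma sq_mul_sum_le_mul_sum_sq {κ : Type*} {t : Finset κ} {k T : ℝ} (hk : 0 ≤ k)
    (hT : t.card * k ≤ T) (f : κ → ℝ) :
    (k * ∑ i ∈ t, f i) ^ 2 ≤ T * (k * ∑ i ∈ t, f i ^ 2) := calc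
  _ = k ^ 2 * (∑ i ∈ t, f i) ^ 2 := mul_pow _ _ _
  _ ≤ k ^ 2 * (t.card * ∑ i ∈ t, f i ^ 2) := by
    gcongr
    exact sq_sum_le_card_mul_sum_sq
  _ = t.card * k * (k * ∑ i ∈ t, f i ^ 2) := by ring
  _ ≤ T * (k * ∑ i ∈ t, f i ^ 2) := by gcongr

lemma sq_load_add_source_le {c S L P T I Q : ℝ} (hT : 0 ≤ T) (hI : 0 ≤ I) (hL : L ^ 2 ≤ T * I)
    (hP : P ^ 2 ≤ T * Q) :
    (2 * c * (2 * S + L) + 2 * P) ^ 2 ≤ 8 * (8 + 2 * T) * (c ^ 2 * (S ^ 2 + I)) + 8 * T * Q := by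
  have load_le : (2 * S + L) ^ 2 ≤ (8 + 2 * T) * (S ^ 2 + I) := by
    have : 0 ≤ T * S ^ 2 := by positivity
    linarith [add_sq_le (a := 2 * S) (b := L)]
  calc (2 * c * (2 * S + L) + 2 * P) ^ 2
      ≤ 2 * ((2 * c * (2 * S + L)) ^ 2 + (2 * P) ^ 2) := add_sq_le
    _ = 8 * (c ^ 2 * (2 * S + L) ^ 2) + 8 * P ^ 2 := by ring
    _ ≤ 8 * (c ^ 2 * ((8 + 2 * T) * (S ^ 2 + I))) + 8 * (T * Q) := by gcongr
    _ = 8 * (8 + 2 * T) * (c ^ 2 * (S ^ 2 + I)) + 8 * T * Q := by ring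

/-- The constant of the error estimate, for coercivity and continuity constants `α` and `β`, final
time `T` and smoother constant `C₁`: the factor `1 + 1 / α` returns from the energy to the norms,
and the three summands weigh the initial data, the load and the truncation errors. -/
noncomputable def errorConstant (α β T C₁ : ℝ) : ℝ :=
  (1 + 1 / α) * (2 * (1 + β) + 8 * (8 + 2 * T) * (C₁ ^ 2 / α) + 8 * T)

lemma errorConstant_pos {α β T : ℝ} (hα : 0 < α) (hβ : 0 ≤ β) (hT : 0 ≤ T) (C₁ : ℝ) :
    0 < errorConstant α β T C₁ := by
  unfold errorConstant
  positivity

lemma mul_le_errorConstant_mul {α β T C₁ x y z Φ : ℝ} (hα : 0 < α) (hβ : 0 ≤ β) (hT : 0 ≤ T)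
    (hx : 0 ≤ x) (hy : 0 ≤ y) (hz : 0 ≤ z)
    (hΦ : Φ ≤ 2 * (1 + β) * x + 8 * (8 + 2 * T) * (C₁ ^ 2 / α) * y + 8 * T * z) :
    (1 + 1 / α) * Φ ≤ errorConstant α β T C₁ * (x + y + z) := by
  have cross_nonneg : 0 ≤ 2 * (1 + β) * (y + z) + 8 * (8 + 2 * T) * (C₁ ^ 2 / α) * (x + z) +
      8 * T * (x + y) := by positivity
  rw [errorConstant, mul_assoc]
  gcongr
  linarith

section ErrorEstimate

variable {H V : Type*} [NormedAddCommGroup H] [InnerProductSpace ℝ H] [AddCommGroup V]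
  [Module ℝ V] {ι E : V →ₗ[ℝ] H} {a : V →ₗ[ℝ] V →ₗ[ℝ] ℝ} {Nh : Seminorm ℝ V} {k : ℝ}
  {ζ : ℕ → V}

lemma norm_le_mul_sqrt_of_coercive {α K : ℝ} (hα : 0 < α) (hK : 0 ≤ K)
    (coercive : ∀ w, α * Nh w ^ 2 ≤ a w w) (hE : ∀ w, ‖E w‖ ≤ K * Nh w) (w : V) :
    ‖E w‖ ≤ K / √α * √(a w w) := by
  have norm_le : √α * Nh w ≤ √(a w w) :=
    Real.le_sqrt_of_sq_le (by rw [mul_pow, Real.sq_sqrt hα.le]; exact coercive w)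
  calc ‖E w‖ ≤ K * Nh w := hE w
    _ = K / √α * (√α * Nh w) := by field_simp
    _ ≤ K / √α * √(a w w) := by gcongr

lemma norm_sq_add_seminorm_sq_le_discreteEnergy {α : ℝ} (hα : 0 < α)
    (coercive : ∀ w, α * Nh w ^ 2 ≤ a w w) (n : ℕ) :
    ‖ι (diffQuot k ζ n)‖ ^ 2 + Nh (consecutiveMean ζ n) ^ 2 ≤
      (1 + 1 / α) * discreteEnergy ι a k ζ n := by
  have potential := coercive (consecutiveMean ζ n)
  have seminorm_sq_le : Nh (consecutiveMean ζ n) ^ 2 ≤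
      1 / α * a (consecutiveMean ζ n) (consecutiveMean ζ n) := by
    rwa [one_div_mul_eq_div, le_div_iff₀' hα]
  have : 0 ≤ 1 / α * ‖ι (diffQuot k ζ n)‖ ^ 2 := by positivity
  have : 0 ≤ α * Nh (consecutiveMean ζ n) ^ 2 := by positivity
  rw [discreteEnergy]
  linarith

lemma discreteEnergy_le_norm_sq_add_seminorm_sq {β : ℝ} (hβ : 0 ≤ β)
    (bounded : ∀ w, a w w ≤ β * Nh w ^ 2) (n : ℕ) :
    discreteEnergy ι a k ζ n ≤
      (1 + β) * (‖ι (diffQuot k ζ n)‖ ^ 2 + Nh (consecutiveMean ζ n) ^ 2) := by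
  have potential := bounded (consecutiveMean ζ n)
  have : 0 ≤ β * ‖ι (diffQuot k ζ n)‖ ^ 2 := by positivity
  rw [discreteEnergy]
  linarith [sq_nonneg (Nh (consecutiveMean ζ n))]

theorem IsImplicitScheme.discreteEnergy_le_of_hasDerivWithinAt {M : ℕ} {g g' : ℝ → H} {s : ℕ → H}
    (hζ : IsImplicitScheme ι E a k M (consecutiveMean (consecutiveMean fun j ↦ g (j * k))) s ζ)
    (a_symm : ∀ w v, a w v = a v w) (ha : ∀ w, 0 ≤ a w w) {c T : ℝ} (hc : 0 ≤ c)
    (hE : ∀ w, ‖E w‖ ≤ c * √(a w w)) (hk : 0 < k) (hT : (M + 1) * k ≤ T)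
    (hg : ∀ t ∈ Set.Icc 0 T, HasDerivWithinAt g (g' t) (Set.Icc 0 T) t)
    (hg' : ContinuousOn g' (Set.Icc 0 T)) {m : ℕ} (hm : m ≤ M) :
    discreteEnergy ι a k ζ m ≤ 2 * discreteEnergy ι a k ζ 0 +
      (8 * (8 + 2 * T) * (c ^ 2 * ((⨆ t : Set.Icc 0 T, ‖g t‖ ^ 2) + ∫ t in 0..T, ‖g' t‖ ^ 2)) +
        8 * T * (k * ∑ n ∈ Finset.range M, ‖s n‖ ^ 2)) := by
  have hT_pos : 0 < T := lt_of_lt_of_le (by positivity) hT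
  have node_mem (j : ℕ) (hj : j ≤ M + 1) : j * k ∈ Set.Icc 0 T := by
    refine ⟨by positivity, le_trans ?_ hT⟩
    gcongr
    exact_mod_cast hj
  have g_cont : ContinuousOn g (Set.Icc 0 T) := fun t ht ↦ (hg t ht).continuousWithinAt
  have node_le (j : ℕ) (hj : j ≤ M + 1) :=
    norm_le_sqrt_iSup_norm_sq isCompact_Icc g_cont (node_mem j hj)
  have load_variation (p : ℕ) (hp : p < M) :=
    (sum_norm_consecutiveMean_sub_le _ p).trans <|
      (sum_norm_consecutiveMean_sub_le (fun j : ℕ ↦ g (j * k)) (p + 1)).trans <|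
        sum_norm_sub_le_integral_norm_of_hasDerivWithinAt hg hg' (Nat.mono_cast.mul_const hk.le)
          fun j (hj : j ≤ p + 2) ↦ node_mem j (by omega)
  have energy_le := hζ.discreteEnergy_le a_symm ha hc hE hk
    (fun n hn ↦ norm_consecutiveMean_le
      (norm_consecutiveMean_le (node_le n (by omega)) (node_le (n + 1) (by omega)))
      (norm_consecutiveMean_le (node_le (n + 1) (by omega)) (node_le (n + 2) (by omega))))
    load_variation hm
  have integral_sq_le : (∫ t in 0..T, ‖g' t‖) ^ 2 ≤ T * ∫ t in 0..T, ‖g' t‖ ^ 2 := by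
    simpa only [sub_zero] using sq_integral_le_mul_integral_sq hT_pos hg'.norm
  have source_sq_le := sq_mul_sum_le_mul_sum_sq (t := Finset.range M) (T := T) hk.le
    (by rw [Finset.card_range]; linarith) fun n ↦ ‖s n‖
  have data_le := sq_load_add_source_le (c := c) (S := √(⨆ t : Set.Icc 0 T, ‖g t‖ ^ 2)) hT_pos.le
    (intervalIntegral.integral_nonneg hT_pos.le fun _ _ ↦ sq_nonneg _) integral_sq_le source_sq_le
  rw [Real.sq_sqrt (Real.iSup_nonneg fun _ ↦ sq_nonneg _)] at data_le
  linarith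

lemma isImplicitScheme_of_forall_centred {N : ℕ} {g : ℝ → H} {σ : ℕ → H}
    (hζ : ∀ n, 1 ≤ n → n ≤ N - 1 → ∀ v : V,
      ⟪ι ((k ^ 2)⁻¹ • (ζ (n + 1) - (2 : ℝ) • ζ n + ζ (n - 1))), ι v⟫
        + a ((1 / 4 : ℝ) • (ζ (n + 1) + (2 : ℝ) • ζ n + ζ (n - 1))) v
        = ⟪(1 / 4 : ℝ) • (g (((n : ℝ) + 1) * k) + (2 : ℝ) • g ((n : ℝ) * k)
              + g (((n : ℝ) - 1) * k)), E v⟫ + ⟪σ n, ι v⟫) :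
    IsImplicitScheme ι E a k (N - 1) (consecutiveMean (consecutiveMean fun j ↦ g (j * k)))
      (fun n ↦ σ (n + 1)) ζ := by
  intro n hn v
  have centred := hζ (n + 1) n.succ_pos hn v
  rw [diffQuot_diffQuot, consecutiveMean_consecutiveMean, consecutiveMean_consecutiveMean]
  push_cast at centred ⊢
  rwa [add_sub_cancel_right, add_assoc (n : ℝ) 1 1, one_add_one_eq_two] at centred

end ErrorEstimate

theorem implicit_scheme_error_general {H V : Type*} [NormedAddCommGroup H] [InnerProductSpace ℝ H]
    [AddCommGroup V] [Module ℝ V] (ι E : V →ₗ[ℝ] H) (Nh : Seminorm ℝ V) (a : V →ₗ[ℝ] V →ₗ[ℝ] ℝ)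
    {α β T C₁ h k : ℝ} (hα : 0 < α) (hβ : 0 ≤ β) (hT : 0 < T) (hC₁ : 0 ≤ C₁)
    (a_symm : ∀ w v, a w v = a v w) (coercive : ∀ w, α * Nh w ^ 2 ≤ a w w)
    (bounded : ∀ w, a w w ≤ β * Nh w ^ 2) (hE : ∀ v, ‖E v‖ ≤ C₁ * h ^ 2 * Nh v)
    {N : ℕ} (hk : k = T / N) {g g' : ℝ → H}
    (hg : ∀ t ∈ Set.Icc 0 T, HasDerivWithinAt g (g' t) (Set.Icc 0 T) t)
    (hg' : ContinuousOn g' (Set.Icc 0 T)) {σ : ℕ → H} {ζ : ℕ → V}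
    (hζ : ∀ n, 1 ≤ n → n ≤ N - 1 → ∀ v : V,
      ⟪ι ((k ^ 2)⁻¹ • (ζ (n + 1) - (2 : ℝ) • ζ n + ζ (n - 1))), ι v⟫
        + a ((1 / 4 : ℝ) • (ζ (n + 1) + (2 : ℝ) • ζ n + ζ (n - 1))) v
        = ⟪(1 / 4 : ℝ) • (g (((n : ℝ) + 1) * k) + (2 : ℝ) • g ((n : ℝ) * k)
              + g (((n : ℝ) - 1) * k)), E v⟫ + ⟪σ n, ι v⟫)
    {m : ℕ} (hm : m < N) :
    ‖ι (k⁻¹ • (ζ (m + 1) - ζ m))‖ ^ 2 + Nh ((1 / 2 : ℝ) • (ζ (m + 1) + ζ m)) ^ 2 ≤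
      errorConstant α β T C₁ *
        (‖ι (k⁻¹ • (ζ 1 - ζ 0))‖ ^ 2 + Nh ((1 / 2 : ℝ) • (ζ 1 + ζ 0)) ^ 2
          + h ^ 4 * ((⨆ s : Set.Icc 0 T, ‖g s‖ ^ 2) + ∫ s in 0..T, ‖g' s‖ ^ 2)
          + k * ∑ n ∈ Finset.Icc 1 (N - 1), ‖σ n‖ ^ 2) := by
  have hN : 0 < N := m.zero_le.trans_lt hm
  have hk_pos : 0 < k := by rw [hk]; positivity
  have final_time : ((N - 1 : ℕ) + 1) * k ≤ T := by
    rw [← Nat.cast_add_one, Nat.sub_add_cancel hN, hk, mul_div_cancel₀ T (by positivity)]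
  have energy_le := (isImplicitScheme_of_forall_centred hζ).discreteEnergy_le_of_hasDerivWithinAt
    a_symm (fun w ↦ (by positivity : 0 ≤ α * Nh w ^ 2).trans (coercive w)) (by positivity)
    (norm_le_mul_sqrt_of_coercive hα (by positivity) coercive hE) hk_pos final_time hg hg'
    (Nat.le_sub_one_of_lt hm)
  have initial_le : discreteEnergy ι a k ζ 0 ≤
      (1 + β) * (‖ι (k⁻¹ • (ζ 1 - ζ 0))‖ ^ 2 + Nh ((1 / 2 : ℝ) • (ζ 1 + ζ 0)) ^ 2) :=
    discreteEnergy_le_norm_sq_add_seminorm_sq hβ bounded 0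
  have smoother_sq : (C₁ * h ^ 2 / √α) ^ 2 = C₁ ^ 2 / α * h ^ 4 := by
    rw [div_pow, Real.sq_sqrt hα.le]
    ring
  have source_reindex : ∑ n ∈ Finset.range (N - 1), ‖σ (n + 1)‖ ^ 2 =
      ∑ n ∈ Finset.Icc 1 (N - 1), ‖σ n‖ ^ 2 := by
    rw [Finset.range_eq_Ico, Finset.sum_Ico_add' (fun n ↦ ‖σ n‖ ^ 2),
      Finset.Ico_add_one_right_eq_Icc]
  rw [smoother_sq, source_reindex] at energy_le
  have hS : 0 ≤ ⨆ s : Set.Icc 0 T, ‖g s‖ ^ 2 := Real.iSup_nonneg fun _ ↦ sq_nonneg _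
  have hI : 0 ≤ ∫ s in 0..T, ‖g' s‖ ^ 2 :=
    intervalIntegral.integral_nonneg hT.le fun _ _ ↦ sq_nonneg _
  exact (norm_sq_add_seminorm_sq_le_discreteEnergy hα coercive m).trans <|
    mul_le_errorConstant_mul hα hβ hT.le (add_nonneg (sq_nonneg _) (sq_nonneg _)) (by positivity)
      (by positivity) (energy_le.trans (by linarith))

/-- Error estimate for the implicit fully discrete scheme (no CFL condition and no
inverse inequality are assumed). -/
theorem implicit_scheme_error (α β T C₁ : ℝ) (hα : 0 < α) (hαβ : α ≤ β) (hT : 0 < T)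
    (hC₁ : 0 < C₁) :
    ∃ C > 0,
      ∀ (H : Type) [NormedAddCommGroup H] [InnerProductSpace ℝ H] [CompleteSpace H]
        (V : Submodule ℝ H) (Nh : Seminorm ℝ V) (a : V →ₗ[ℝ] V →ₗ[ℝ] ℝ),
        (∀ w v : V, a w v = a v w) →
        (∀ w : V, α * Nh w ^ 2 ≤ a w w) →
        (∀ w v : V, |a w v| ≤ β * Nh w * Nh v) →
        ∀ (h : ℝ), 0 < h →
          ∀ (E : V →ₗ[ℝ] H), (∀ v : V, ‖E v‖ ≤ C₁ * h ^ 2 * Nh v) →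
            ∀ (N : ℕ) (hN : 2 ≤ N) (k : ℝ), k = T / N →
              ∀ (g g' : ℝ → H),
                (∀ t ∈ Set.Icc (0 : ℝ) T, HasDerivWithinAt g (g' t) (Set.Icc (0 : ℝ) T) t) →
                ContinuousOn g' (Set.Icc (0 : ℝ) T) →
                ∀ (σ : ℕ → H) (ζ : ℕ → V),
                  (∀ n, 1 ≤ n → n ≤ N - 1 → ∀ v : V,
                    ⟪(((k ^ 2)⁻¹ • (ζ (n + 1) - (2 : ℝ) • ζ n + ζ (n - 1)) : V) : H),
                        (v : H)⟫
                      + a ((1 / 4 : ℝ) • (ζ (n + 1) + (2 : ℝ) • ζ n + ζ (n - 1))) v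
                      = ⟪(1 / 4 : ℝ) • (g (((n : ℝ) + 1) * k) + (2 : ℝ) • g ((n : ℝ) * k)
                            + g (((n : ℝ) - 1) * k)), E v⟫ + ⟪σ n, (v : H)⟫) →
                  ∀ m, 1 ≤ m → m ≤ N - 1 →
                    ‖(k⁻¹ • (ζ (m + 1) - ζ m) : V)‖ ^ 2
                        + Nh ((1 / 2 : ℝ) • (ζ (m + 1) + ζ m)) ^ 2
                      ≤ C * (‖(k⁻¹ • (ζ 1 - ζ 0) : V)‖ ^ 2
                          + Nh ((1 / 2 : ℝ) • (ζ 1 + ζ 0)) ^ 2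
                          + h ^ 4 * ((⨆ s : Set.Icc (0 : ℝ) T, ‖g ↑s‖ ^ 2)
                              + ∫ s in (0 : ℝ)..T, ‖g' s‖ ^ 2)
                          + k * ∑ n ∈ Finset.Icc 1 (N - 1), ‖σ n‖ ^ 2) := by
  exact ⟨errorConstant α β T C₁, errorConstant_pos hα (hα.le.trans hαβ) hT.le C₁,
    fun H _ _ _ V Nh a a_symm coercive bounded h _ E hE N _ k hk g g' hg hg' σ ζ hζ m _ hm ↦
      implicit_scheme_error_general V.subtype E Nh a hα (hα.le.trans hαβ) hT hC₁.le a_symm coercive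
        (fun w ↦ by linarith [le_abs_self (a w w), bounded w w]) hE hk hg hg' hζ (by omega)⟩
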